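/- Distinct canonical forms represent distinct operators: if two canonical forms (p, (s₁,…,s_k), c) and (p′, (s′₁,…,s′_m), c′) have equal products in GL(3,ℂ), then p = p′, k = m, sᵢ = s′ᵢ for all i, and c = c′. -/

import Mathlib

open Matrix Complex

noncomputable section

/-- ω = exp(2πi/3), a primitive third root of unity. -/
def ω : ℂ := exp (2 * Real.pi * I / 3)

/-- ζ = exp(2πi/9), a primitive ninth root of unity. -/
def ζ : ℂ := exp (2 * Real.pi * I / 9)

/-- The qutrit Pauli X matrix. -/
def Xmat : Matrix (Fin 3) (Fin 3) ℂ := !![0,0,1; 1,0,0; 0,1,0]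

/-- The qutrit Pauli Z matrix. -/
def Zmat : Matrix (Fin 3) (Fin 3) ℂ := !![1,0,0; 0,ω,0; 0,0,ω^2]

/-- The qutrit Hadamard matrix H = (1/(i√3))·[[1,1,1],[1,ω,ω²],[1,ω²,ω]]. -/
def Hmat : Matrix (Fin 3) (Fin 3) ℂ :=
  (I * (Real.sqrt 3 : ℂ))⁻¹ • !![1,1,1; 1,ω,ω^2; 1,ω^2,ω]

/-- The qutrit phase matrix S = ζ⁸·diag(1,1,ω). -/
def Smat : Matrix (Fin 3) (Fin 3) ℂ := ζ^8 • !![1,0,0; 0,1,0; 0,0,ω]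

/-- The qutrit T matrix T = diag(1,ζ,ζ⁸). -/
def Tmat : Matrix (Fin 3) (Fin 3) ℂ := !![1,0,0; 0,ζ,0; 0,0,ζ^8]

lemma omega_ne_zero : ω ≠ 0 := Complex.exp_ne_zero _
lemma zeta_ne_zero : ζ ≠ 0 := Complex.exp_ne_zero _

lemma omega_im_pos : 0 < ω.im := by
  have h : ω = Complex.exp ((2 * Real.pi / 3 : ℝ) * I) := by
    rw [ω]; push_cast; ring_nf
  rw [h, Complex.exp_ofReal_mul_I_im]
  apply Real.sin_pos_of_pos_of_lt_pi
  · positivity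
  · nlinarith [Real.pi_pos]

lemma omega_ne_one : ω ≠ 1 := by
  intro h
  have := omega_im_pos
  rw [h] at this
  simp at this

lemma omega_cube : ω ^ 3 = 1 := by
  rw [ω, ← Complex.exp_nat_mul]
  rw [show (3:ℕ) * (2 * Real.pi * I / 3) = 2 * Real.pi * I by push_cast; ring]
  exact Complex.exp_two_pi_mul_I

lemma detX : Xmat.det ≠ 0 := by
  simp [Xmat, Matrix.det_fin_three]

lemma detZ : Zmat.det ≠ 0 := by
  simp [Zmat, Matrix.det_fin_three, omega_ne_zero]

lemma detS : Smat.det ≠ 0 := by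
  simp [Smat, Matrix.det_fin_three, omega_ne_zero, zeta_ne_zero]

lemma detT : Tmat.det ≠ 0 := by
  simp [Tmat, Matrix.det_fin_three, zeta_ne_zero]

lemma detH : Hmat.det ≠ 0 := by
  rw [Hmat, Matrix.det_smul]
  apply mul_ne_zero
  · apply pow_ne_zero
    apply inv_ne_zero
    apply mul_ne_zero Complex.I_ne_zero
    simp [Complex.ofReal_ne_zero]
  · rw [Matrix.det_fin_three]
    simp [Matrix.vecHead, Matrix.vecTail]
    intro h
    have h3 : ω ^ 3 = 1 := omega_cube
    have key : 3 * ω * (ω - 1) = 0 := by linear_combination h + ω * h3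
    rcases mul_eq_zero.mp key with h' | h'
    · rcases mul_eq_zero.mp h' with h'' | h''
      · norm_num at h''
      · exact omega_ne_zero h''
    · exact omega_ne_one (by linear_combination h')

/-- X as an element of GL(3, ℂ). -/
def Xg : GL (Fin 3) ℂ := Matrix.GeneralLinearGroup.mkOfDetNeZero Xmat detX

/-- Z as an element of GL(3, ℂ). -/
def Zg : GL (Fin 3) ℂ := Matrix.GeneralLinearGroup.mkOfDetNeZero Zmat detZ

/-- H as an element of GL(3, ℂ). -/
def Hg : GL (Fin 3) ℂ := Matrix.GeneralLinearGroup.mkOfDetNeZero Hmat detH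

/-- S as an element of GL(3, ℂ). -/
def Sg : GL (Fin 3) ℂ := Matrix.GeneralLinearGroup.mkOfDetNeZero Smat detS

/-- T as an element of GL(3, ℂ). -/
def Tg : GL (Fin 3) ℂ := Matrix.GeneralLinearGroup.mkOfDetNeZero Tmat detT

/-- The Clifford group 𝒞: the subgroup of GL(3,ℂ) generated by H and S. -/
def Cliff : Subgroup (GL (Fin 3) ℂ) := Subgroup.closure {Hg, Sg}

/-- The Clifford+T group: the subgroup of GL(3,ℂ) generated by H, S and T. -/
def CliffT : Subgroup (GL (Fin 3) ℂ) := Subgroup.closure {Hg, Sg, Tg}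

/-- The subgroup 𝒮 of GL(3,ℂ) generated by S and X. -/
def Sgrp : Subgroup (GL (Fin 3) ℂ) := Subgroup.closure {Sg, Xg}

/-- Letters of words over the alphabet {H, S, T}. -/
inductive Letter : Type
  | H : Letter
  | S : Letter
  | T : Letter
  deriving DecidableEq

/-- The gate associated to a letter. -/
def Letter.g : Letter → GL (Fin 3) ℂ
  | .H => Hg
  | .S => Sg
  | .T => Tg

/-- The product of the letters of a word. -/
def wordProd (w : List Letter) : GL (Fin 3) ℂ := (w.map Letter.g).prod

/-- The allowed prefixes of a canonical form: ε, T, H²T. -/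
def Prefixes : Set (List Letter) := {[], [.T], [.H, .H, .T]}

/-- The allowed syllables of a canonical form: HT, H³T, SHT, SH³T, S²HT, S²H³T. -/
def Syllables : Set (List Letter) :=
  {[.H, .T], [.H, .H, .H, .T], [.S, .H, .T],
   [.S, .H, .H, .H, .T], [.S, .S, .H, .T], [.S, .S, .H, .H, .H, .T]}

/-- The T-count of a canonical form with prefix `p` and syllable list `ss`:
`k` if the prefix is empty and `k+1` otherwise, where `k` is the number of syllables. -/
def TCount (p : List Letter) (ss : List (List Letter)) : ℕ :=
  ss.length + (if p = [] then 0 else 1)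

/-- P₊ = (P + P²)/√6. -/
def Pplus (P : Matrix (Fin 3) (Fin 3) ℂ) : Matrix (Fin 3) (Fin 3) ℂ :=
  ((Real.sqrt 6 : ℂ))⁻¹ • (P + P ^ 2)

/-- P₋ = i(P − P²)/√6. -/
def Pminus (P : Matrix (Fin 3) (Fin 3) ℂ) : Matrix (Fin 3) (Fin 3) ℂ :=
  (I * ((Real.sqrt 6 : ℂ))⁻¹) • (P - P ^ 2)

/-- The ordered tuple (Q₁, …, Q₈) = (Z₊, X₊, (XZ)₊, (XZ²)₊, Z₋, X₋, (XZ)₋, (XZ²)₋). -/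
def Q : Fin 8 → Matrix (Fin 3) (Fin 3) ℂ :=
  ![Pplus Zmat, Pplus Xmat, Pplus (Xmat * Zmat), Pplus (Xmat * Zmat ^ 2),
    Pminus Zmat, Pminus Xmat, Pminus (Xmat * Zmat), Pminus (Xmat * Zmat ^ 2)]

/-- The adjoint representation Û of U, the 8×8 real matrix with
entries Û_{ij} = tr(Qᵢ U Qⱼ U†). -/
def adj (U : Matrix (Fin 3) (Fin 3) ℂ) : Matrix (Fin 8) (Fin 8) ℝ :=
  Matrix.of fun i j => (Matrix.trace (Q i * U * Q j * Uᴴ)).re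

/-- The top-left 4×4 quadrant Û₊₊. -/
def blockPP (A : Matrix (Fin 8) (Fin 8) ℝ) : Matrix (Fin 4) (Fin 4) ℝ :=
  Matrix.of fun i j => A ⟨i.val, by omega⟩ ⟨j.val, by omega⟩

/-- The top-right 4×4 quadrant Û₊₋. -/
def blockPM (A : Matrix (Fin 8) (Fin 8) ℝ) : Matrix (Fin 4) (Fin 4) ℝ :=
  Matrix.of fun i j => A ⟨i.val, by omega⟩ ⟨j.val + 4, by omega⟩

/-- The bottom-left 4×4 quadrant Û₋₊. -/
def blockMP (A : Matrix (Fin 8) (Fin 8) ℝ) : Matrix (Fin 4) (Fin 4) ℝ :=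
  Matrix.of fun i j => A ⟨i.val + 4, by omega⟩ ⟨j.val, by omega⟩

/-- The bottom-right 4×4 quadrant Û₋₋. -/
def blockMM (A : Matrix (Fin 8) (Fin 8) ℝ) : Matrix (Fin 4) (Fin 4) ℝ :=
  Matrix.of fun i j => A ⟨i.val + 4, by omega⟩ ⟨j.val + 4, by omega⟩

/-- α = sin(2π/9). -/
def αR : ℝ := Real.sin (2 * Real.pi / 9)

/-- The ring ℤ[α]: the subring of ℝ generated by 1/2 and α. -/
def Zα : Subring ℝ := Subring.closure {1/2, αR}

/-- The ring ℤ[1/2, 1/α]: the subring of ℝ generated by 1/2, α and α⁻¹. -/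
def Zhα : Subring ℝ := Subring.closure {1/2, αR, αR⁻¹}

lemma alpha_mem_Zα : αR ∈ Zα := Subring.subset_closure (by simp)

/-!
The Clifford group stabilises a lattice over `ℤ[ζ]`, so its matrices in a basis of this lattice are
integral. In that basis `T`, and with it every nonempty prefix and every syllable, has a simple
pole at the prime above `3`, with a residue of rank one over `𝔽₃`. The residues of all these blocks
share one row vector, which does not annihilate the column of any syllable. Hence the leading
coefficients of the blocks of a canonical form multiply to a nonzero matrix: the pole order of the
product counts the blocks, and the column space of its leading coefficient is that of the first
block. The blocks have distinct column spaces, so the first block can be read off and cancelled.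
-/

section Residue

variable {n R K k : Type*} [CommRing R] [CommRing K] [Algebra R K] [CommRing k]

/-- The matrix `W` over `K` has residue `r` in degree `d`: the matrix `ϖ ^ d • W` has entries in
`R`, and `ρ` reduces it to `r`. For `ρ` the reduction modulo a uniformizer `ϖ` and `r ≠ 0`, this
says that `W` has a pole of order exactly `d` with leading coefficient `r`. -/
def HasResidue (ϖ : R) (ρ : R →+* k) (d : ℕ) (W : Matrix n n K) (r : Matrix n n k) : Prop :=
  ∃ P : Matrix n n R, P.map (algebraMap R K) = ϖ ^ d • W ∧ P.map ρ = r

namespace HasResidue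

variable {ϖ : R} {ρ : R →+* k} {d e : ℕ} {W V : Matrix n n K} {r s : Matrix n n k}

lemma one [DecidableEq n] : HasResidue ϖ ρ 0 (1 : Matrix n n K) 1 :=
  ⟨1, by simp, by simp⟩

lemma mul [Fintype n] (hW : HasResidue ϖ ρ d W r) (hV : HasResidue ϖ ρ e V s) :
    HasResidue ϖ ρ (d + e) (W * V) (r * s) := by
  obtain ⟨P, hP, rfl⟩ := hW
  obtain ⟨Q, hQ, rfl⟩ := hV
  refine ⟨P * Q, ?_, Matrix.map_mul⟩
  rw [Matrix.map_mul, hP, hQ, smul_mul_smul_comm, ← pow_add]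

lemma zero_of_lt (hϖ : ρ ϖ = 0) (hW : HasResidue ϖ ρ d W r) (hde : d < e) :
    HasResidue ϖ ρ e W 0 := by
  obtain ⟨P, hP, -⟩ := hW
  refine ⟨ϖ ^ (e - d) • P, ?_, ?_⟩
  · rw [← Nat.sub_add_cancel hde.le, pow_add, mul_smul, ← hP, Nat.add_sub_cancel]
    ext i j
    simp [Algebra.smul_def]
  · ext i j
    simp [hϖ, zero_pow (Nat.sub_pos_of_lt hde).ne']

variable [FaithfulSMul R K]

lemma unique (hr : HasResidue ϖ ρ d W r) (hs : HasResidue ϖ ρ d W s) : r = s := by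
  obtain ⟨P, hP, rfl⟩ := hr
  obtain ⟨Q, hQ, rfl⟩ := hs
  rw [Matrix.map_injective (FaithfulSMul.algebraMap_injective R K) (hP.trans hQ.symm)]

lemma degree_unique (hϖ : ρ ϖ = 0) (hr : HasResidue ϖ ρ d W r) (hs : HasResidue ϖ ρ e W s)
    (hr₀ : r ≠ 0) (hs₀ : s ≠ 0) : d = e := by
  rcases lt_trichotomy d e with hlt | heq | hgt
  · exact absurd (hs.unique (hr.zero_of_lt hϖ hlt)) hs₀
  · exact heq
  · exact absurd (hr.unique (hs.zero_of_lt hϖ hgt)) hr₀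

end HasResidue

end Residue

section ReducedBlockList

variable {n k β : Type*} [Fintype n] [NonUnitalNonAssocSemiring k]

/-- A list of blocks is reduced if the residues `u b ⊗ v` of consecutive blocks have nonzero
product: since the left factor always contributes the same row `v`, this is a condition on every
block but the first. -/
def IsReducedBlockList (B : Set β) (u : β → n → k) (v : n → k) (L : List β) : Prop :=
  (∀ b ∈ L, b ∈ B) ∧ ∀ b ∈ L.tail, v ⬝ᵥ u b ≠ 0

lemma IsReducedBlockList.tail {B : Set β} {u : β → n → k} {v : n → k} {L : List β}
    (hL : IsReducedBlockList B u v L) : IsReducedBlockList B u v L.tail :=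
  ⟨fun b hb => hL.1 b (List.mem_of_mem_tail hb), fun b hb => hL.2 b (List.mem_of_mem_tail hb)⟩

end ReducedBlockList

section SimplePoleSystem

variable {n R K k G β : Type*} [Fintype n] [DecidableEq n] [CommRing R] [CommRing K] [Algebra R K]
  [Field k] [Group G]

/-- Under the matrix representation `φ`, the subgroup `C` is integral, and each block `b ∈ B` acts
through an element `g b` with a pole of order at most one whose residue is the rank-one matrix
`u b ⊗ v`. The row vector `v` is the same for all blocks, whereas distinct blocks have distinct
directions `u b`. -/
structure IsSimplePoleSystem (ϖ : R) (ρ : R →+* k) (φ : G →* Matrix n n K) (C : Subgroup G)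
    (B : Set β) (g : β → G) (u : β → n → k) (v : n → k) : Prop where
  map_uniformizer : ρ ϖ = 0
  integral : ∀ c ∈ C, φ c ∈ (algebraMap R K).mapMatrix.range
  hasResidue : ∀ b ∈ B, HasResidue ϖ ρ 1 (φ (g b)) (vecMulVec (u b) v)
  row_ne_zero : v ≠ 0
  direction_ne_zero : ∀ b ∈ B, u b ≠ 0
  eq_of_direction_eq_smul : ∀ b ∈ B, ∀ b' ∈ B, ∀ x : k, u b = x • u b' → b = b'

namespace IsSimplePoleSystem

variable [FaithfulSMul R K] {ϖ : R} {ρ : R →+* k} {φ : G →* Matrix n n K} {C : Subgroup G}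
  {B : Set β} {g : β → G} {u : β → n → k} {v : n → k} {b : β} {L L' : List β} {c c' : G}

lemma exists_isUnit_hasResidue (h : IsSimplePoleSystem ϖ ρ φ C B g u v) (hc : c ∈ C) :
    ∃ r, IsUnit r ∧ HasResidue ϖ ρ 0 (φ c) r := by
  have exists_hasResidue : ∀ x ∈ C, ∃ r, HasResidue ϖ ρ 0 (φ x) r := by
    intro x hx
    obtain ⟨P, hP⟩ := h.integral x hx
    exact ⟨P.map ρ, P, by simpa using hP, rfl⟩
  obtain ⟨r, hr⟩ := exists_hasResidue c hc
  obtain ⟨s, hs⟩ := exists_hasResidue c⁻¹ (inv_mem hc)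
  have hrs : HasResidue ϖ ρ 0 (1 : Matrix n n K) (r * s) := by
    simpa [← map_mul] using hr.mul hs
  exact ⟨r, IsUnit.of_mul_eq_one s (hrs.unique .one), hr⟩

lemma exists_hasResidue_cons (h : IsSimplePoleSystem ϖ ρ φ C B g u v) (hc : c ∈ C)
    (hL : IsReducedBlockList B u v (b :: L)) :
    ∃ w ≠ 0, HasResidue ϖ ρ (L.length + 1) (φ (((b :: L).map g).prod * c)) (vecMulVec (u b) w) := by
  have hb := h.hasResidue b (hL.1 b List.mem_cons_self)
  induction L generalizing b with
  | nil =>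
    obtain ⟨r, hr, hcr⟩ := h.exists_isUnit_hasResidue hc
    refine ⟨v ᵥ* r, ?_, by simpa [vecMulVec_mul] using hb.mul hcr⟩
    rw [← zero_vecMul r]
    exact (vecMul_injective_of_isUnit hr).ne h.row_ne_zero
  | cons b' L ih =>
    obtain ⟨w, hw, hres⟩ := ih hL.tail (h.hasResidue b' (hL.1 b' (by simp)))
    refine ⟨(v ⬝ᵥ u b') • w, smul_ne_zero (hL.2 b' (by simp)) hw, ?_⟩
    rw [← vecMulVec_mul_vecMulVec, List.map_cons, List.prod_cons, mul_assoc, map_mul,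
      List.length_cons, add_comm]
    exact hb.mul hres

lemma exists_ne_zero_hasResidue (h : IsSimplePoleSystem ϖ ρ φ C B g u v) (hc : c ∈ C)
    (hL : IsReducedBlockList B u v L) :
    ∃ r ≠ 0, HasResidue ϖ ρ L.length (φ ((L.map g).prod * c)) r := by
  cases L with
  | nil =>
    obtain ⟨i, -⟩ := Function.ne_iff.mp h.row_ne_zero
    have : Nonempty n := ⟨i⟩
    obtain ⟨r, hr, hcr⟩ := h.exists_isUnit_hasResidue hc
    exact ⟨r, hr.ne_zero, by simpa using hcr⟩
  | cons b L =>
    obtain ⟨w, hw, hres⟩ := h.exists_hasResidue_cons hc hL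
    exact ⟨_, vecMulVec_ne_zero (h.direction_ne_zero b (hL.1 b List.mem_cons_self)) hw, hres⟩

lemma length_eq (h : IsSimplePoleSystem ϖ ρ φ C B g u v) (hc : c ∈ C) (hc' : c' ∈ C)
    (hL : IsReducedBlockList B u v L) (hL' : IsReducedBlockList B u v L')
    (heq : (L.map g).prod * c = (L'.map g).prod * c') : L.length = L'.length := by
  obtain ⟨r, hr, hres⟩ := h.exists_ne_zero_hasResidue hc hL
  obtain ⟨r', hr', hres'⟩ := h.exists_ne_zero_hasResidue hc' hL'
  exact hres.degree_unique h.map_uniformizer (heq ▸ hres') hr hr'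

lemma head_eq {b' : β} (h : IsSimplePoleSystem ϖ ρ φ C B g u v) (hc : c ∈ C) (hc' : c' ∈ C)
    (hL : IsReducedBlockList B u v (b :: L)) (hL' : IsReducedBlockList B u v (b' :: L'))
    (heq : ((b :: L).map g).prod * c = ((b' :: L').map g).prod * c') : b = b' := by
  obtain ⟨w, hw, hres⟩ := h.exists_hasResidue_cons hc hL
  obtain ⟨w', -, hres'⟩ := h.exists_hasResidue_cons hc' hL'
  have hlen : L.length + 1 = L'.length + 1 := h.length_eq hc hc' hL hL' heq
  rw [heq, hlen] at hres
  have hvec : vecMulVec (u b) w = vecMulVec (u b') w' := hres.unique hres'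
  obtain ⟨j, hj⟩ := Function.ne_iff.mp hw
  refine h.eq_of_direction_eq_smul b (hL.1 b List.mem_cons_self) b' (hL'.1 b' List.mem_cons_self)
    (w' j / w j) ?_
  ext i
  have hij : u b i * w j = u b' i * w' j := congr_fun₂ hvec i j
  rw [Pi.smul_apply, smul_eq_mul, div_mul_eq_mul_div, eq_div_iff hj, hij, mul_comm]

theorem eq_and_eq_of_prod_mul_eq (h : IsSimplePoleSystem ϖ ρ φ C B g u v)
    (hc : c ∈ C) (hc' : c' ∈ C)
    (hL : IsReducedBlockList B u v L) (hL' : IsReducedBlockList B u v L')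
    (heq : (L.map g).prod * c = (L'.map g).prod * c') : L = L' ∧ c = c' := by
  have hlen := h.length_eq hc hc' hL hL' heq
  induction L generalizing L' with
  | nil =>
    obtain rfl : L' = [] := List.length_eq_zero_iff.mp hlen.symm
    exact ⟨rfl, mul_left_cancel heq⟩
  | cons b L ih =>
    obtain ⟨b', L', rfl⟩ := List.exists_cons_of_length_eq_add_one hlen.symm
    obtain rfl := h.head_eq hc hc' hL hL' heq
    simp only [List.map_cons, List.prod_cons, mul_assoc, mul_right_inj] at heq
    obtain ⟨rfl, rfl⟩ := ih hL.tail hL'.tail heq (Nat.succ_injective hlen)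
    exact ⟨rfl, rfl⟩

end IsSimplePoleSystem

end SimplePoleSystem

section Cyclotomic

open Polynomial

variable {F : Type*} [Field F] [CharZero F] {p m : ℕ} [Fact p.Prime] {μ : F}

lemma aeval_one_minpoly_eq_zero (hμ : IsPrimitiveRoot μ (p ^ (m + 1))) :
    aeval (1 : ZMod p) (minpoly ℤ μ) = 0 := by
  have hpos : 0 < p ^ (m + 1) := pow_pos (Fact.out : p.Prime).pos _
  rw [← cyclotomic_eq_minpoly hμ hpos, aeval_def, algebraMap_int_eq, ← eval_map, map_cyclotomic_int,
    eval_one_cyclotomic_prime_pow, CharP.cast_eq_zero]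

/-- The integral basis `1, μ, μ², …` of `ℤ[μ]`, for `μ` a primitive root of unity. -/
def cyclotomicPowerBasis {q : ℕ} [NeZero q] (hμ : IsPrimitiveRoot μ q) :
    PowerBasis ℤ (Algebra.adjoin ℤ {μ}) :=
  Algebra.adjoin.powerBasis' (hμ.isIntegral (NeZero.pos q))

lemma cyclotomicPowerBasis_gen {q : ℕ} [NeZero q] (hμ : IsPrimitiveRoot μ q) :
    (cyclotomicPowerBasis hμ).gen = ⟨μ, Algebra.self_mem_adjoin_singleton ℤ μ⟩ :=
  Algebra.adjoin.powerBasis'_gen _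

/-- The reduction of `ℤ[μ]` modulo its unique prime ideal above `p`, for `μ` a primitive root of
unity of order `p ^ (m + 1)`. -/
def cyclotomicResidue (hμ : IsPrimitiveRoot μ (p ^ (m + 1))) :
    Algebra.adjoin ℤ {μ} →ₐ[ℤ] ZMod p :=
  (cyclotomicPowerBasis hμ).lift 1 <| by
    rw [cyclotomicPowerBasis, ← Algebra.adjoin.powerBasis'_minpoly_gen]
    exact aeval_one_minpoly_eq_zero hμ

lemma cyclotomicResidue_gen (hμ : IsPrimitiveRoot μ (p ^ (m + 1))) :
    cyclotomicResidue hμ ⟨μ, Algebra.self_mem_adjoin_singleton ℤ μ⟩ = 1 := by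
  rw [← cyclotomicPowerBasis_gen hμ]
  exact PowerBasis.lift_gen _ _ _

end Cyclotomic

section CliffordLattice

lemma isPrimitiveRoot_zeta : IsPrimitiveRoot ζ (3 ^ (1 + 1)) := by
  simpa [ζ] using Complex.isPrimitiveRoot_exp 9 (by norm_num)

lemma omega_eq_zeta_cube : ω = ζ ^ 3 := by
  rw [ω, ζ, ← Complex.exp_nat_mul]
  congr 1
  push_cast
  ring

lemma zeta_relation : ζ ^ 6 + ζ ^ 3 + 1 = 0 := by
  have hprod : (ω - 1) * (ζ ^ 6 + ζ ^ 3 + 1) = 0 := by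
    linear_combination omega_cube + (1 - ω) * (ω + ζ ^ 3 + 1) * omega_eq_zeta_cube
  exact (mul_eq_zero.mp hprod).resolve_left (sub_ne_zero.mpr omega_ne_one)

lemma I_mul_sqrt_three : I * (Real.sqrt 3 : ℂ) = 1 + 2 * ω := by
  have harg : 2 * Real.pi * I / 3 = ((Real.pi - Real.pi / 3 : ℝ) : ℂ) * I := by
    push_cast
    ring
  rw [ω, harg, Complex.exp_mul_I, ← Complex.ofReal_cos, ← Complex.ofReal_sin, Real.cos_pi_sub,
    Real.sin_pi_sub, Real.cos_pi_div_three, Real.sin_pi_div_three]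
  push_cast
  ring

lemma I_mul_sqrt_three_inv : (I * (Real.sqrt 3 : ℂ))⁻¹ = -(1 + 2 * ζ ^ 3) / 3 := by
  rw [I_mul_sqrt_three, omega_eq_zeta_cube]
  refine (eq_inv_of_mul_eq_one_left ?_).symm
  linear_combination (-4 / 3 : ℂ) * zeta_relation

/-- The ring `ℤ[ζ]`, over which all pole orders are measured. -/
abbrev ZetaIntegers : Subalgebra ℤ ℂ := Algebra.adjoin ℤ {ζ}

/-- The element `ζ` of `ℤ[ζ]`. -/
def zetaInt : ZetaIntegers := ⟨ζ, Algebra.self_mem_adjoin_singleton ℤ ζ⟩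

@[simp]
lemma coe_zetaInt : (zetaInt : ℂ) = ζ := rfl

/-- The reduction of `ℤ[ζ]` modulo its prime ideal above `3`. -/
def residueMap : ZetaIntegers →+* ZMod 3 := (cyclotomicResidue isPrimitiveRoot_zeta).toRingHom

@[simp]
lemma residueMap_zetaInt : residueMap zetaInt = 1 := cyclotomicResidue_gen isPrimitiveRoot_zeta

/-- A uniformizer of `ℤ[ζ]` at the prime above `3`. It is associated to `1 - ζ`; the choice of
`1 - ζ ^ 2` keeps the entries of `integralGate` short. -/
def uniformizer : ZetaIntegers := 1 - zetaInt ^ 2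

lemma residueMap_uniformizer : residueMap uniformizer = 0 := by
  simp [uniformizer]

/-- The columns of this matrix span a `ℤ[ζ]`-lattice stable under the Clifford group. The factor
`1 + ζ + ζ ^ 2` is `(1 - ω) / (1 - ζ)`, of valuation `2` at the prime above `3`. -/
def latticeBasis : Matrix (Fin 3) (Fin 3) ℂ :=
  !![1, 0, 0; 1, 1 + ζ + ζ ^ 2, 0; 1, -(1 + ζ + ζ ^ 2), 1 - ω]

lemma det_latticeBasis_ne_zero : latticeBasis.det ≠ 0 := by
  have hω : 1 - ω ≠ 0 := sub_ne_zero.mpr omega_ne_one.symm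
  have hζ : 1 + ζ + ζ ^ 2 ≠ 0 := fun h =>
    hω (by linear_combination (1 - ζ) * h - omega_eq_zeta_cube)
  simpa [latticeBasis, det_fin_three] using ⟨hζ, hω⟩

/-- The matrix of an operator in the basis `latticeBasis`. -/
def latticeRep : GL (Fin 3) ℂ →* Matrix (Fin 3) (Fin 3) ℂ :=
  (Units.coeHom _).comp
    (MulAut.conj (GeneralLinearGroup.mkOfDetNeZero _ det_latticeBasis_ne_zero)⁻¹).toMonoidHom

lemma eq_smul_latticeRep_iff {P : Matrix (Fin 3) (Fin 3) ℂ} {a : ZetaIntegers} {g : GL (Fin 3) ℂ} :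
    P = a • latticeRep g ↔ latticeBasis * P = a • (g.1 * latticeBasis) := by
  set L := GeneralLinearGroup.mkOfDetNeZero _ det_latticeBasis_ne_zero
  have hrep : latticeBasis * latticeRep g = g.1 * latticeBasis := by
    change L.1 * (L⁻¹ * g * L⁻¹⁻¹ : GL (Fin 3) ℂ).1 = (g * L).1
    rw [← Units.val_mul]
    group
  rw [← hrep, ← Matrix.mul_smul]
  exact L.isUnit.mul_right_inj.symm

/-- The matrix of a gate in the lattice basis, multiplied by the uniformizer for the gate `T`. -/
def integralGate : Letter → Matrix (Fin 3) (Fin 3) ZetaIntegers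
  | .H => !![zetaInt ^ 6 - zetaInt ^ 3, 0, zetaInt ^ 6;
      zetaInt ^ 3 * (1 - zetaInt), 1, zetaInt ^ 3 * (1 - zetaInt);
      zetaInt ^ 3 - zetaInt ^ 6 - 1, 0, zetaInt ^ 3 - zetaInt ^ 6]
  | .S => zetaInt ^ 8 • !![1, 0, 0; 0, 1, 0; -1, 1 + zetaInt + zetaInt ^ 2, zetaInt ^ 3]
  | .T => !![uniformizer, 0, 0;
      -(zetaInt ^ 3 + zetaInt ^ 7), uniformizer * zetaInt, 0;
      zetaInt ^ 2 + zetaInt ^ 6, -zetaInt ^ 8 * (1 + zetaInt) * uniformizer,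
        uniformizer * zetaInt ^ 8]

/-- The reduction of `integralGate`. -/
def gateResidue : Letter → Matrix (Fin 3) (Fin 3) (ZMod 3)
  | .H => !![0, 0, 1; 0, 1, 0; -1, 0, 0]
  | .S => !![1, 0, 0; 0, 1, 0; -1, 0, 1]
  | .T => !![0, 0, 0; -2, 0, 0; 2, 0, 0]

lemma map_integralGate_eq_smul_latticeRep (a : Letter) :
    (integralGate a).map (algebraMap ZetaIntegers ℂ) =
      uniformizer ^ [a].count .T • latticeRep a.g := by
  rw [eq_smul_latticeRep_iff]
  have hζ := zeta_relation
  cases a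
  · change _ = _ • (Hmat * _)
    rw [Hmat, I_mul_sqrt_three_inv]
    ext i j
    fin_cases i <;> fin_cases j <;>
      simp [integralGate, latticeBasis, omega_eq_zeta_cube, Matrix.mul_apply,
        Fin.sum_univ_three] <;> grind
  · change _ = _ • (Smat * _)
    ext i j
    fin_cases i <;> fin_cases j <;>
      simp [integralGate, Smat, latticeBasis, omega_eq_zeta_cube, Matrix.mul_apply,
        Fin.sum_univ_three] <;> grind
  · change _ = _ • (Tmat * _)
    ext i j
    fin_cases i <;> fin_cases j <;>
      simp [integralGate, Tmat, latticeBasis, omega_eq_zeta_cube, uniformizer, Algebra.smul_def,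
        Matrix.mul_apply, Fin.sum_univ_three] <;> grind

lemma map_integralGate_eq_gateResidue (a : Letter) :
    (integralGate a).map residueMap = gateResidue a := by
  cases a <;> ext i j <;> fin_cases i <;> fin_cases j <;>
    simp [integralGate, gateResidue, residueMap_uniformizer] <;> grind

lemma hasResidue_latticeRep (a : Letter) :
    HasResidue uniformizer residueMap ([a].count .T) (latticeRep a.g) (gateResidue a) :=
  ⟨integralGate a, map_integralGate_eq_smul_latticeRep a, map_integralGate_eq_gateResidue a⟩

/-- The leading coefficient of a word in the lattice basis, at the order given by its number of
letters `T`; it may vanish. -/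
def wordResidue (w : List Letter) : Matrix (Fin 3) (Fin 3) (ZMod 3) := (w.map gateResidue).prod

lemma hasResidue_latticeRep_wordProd (w : List Letter) :
    HasResidue uniformizer residueMap (w.count .T) (latticeRep (wordProd w)) (wordResidue w) := by
  induction w with
  | nil => simpa [wordProd, wordResidue] using HasResidue.one
  | cons a w ih =>
    rw [← List.singleton_append, List.count_append]
    simpa [wordProd, wordResidue] using (hasResidue_latticeRep a).mul ih

end CliffordLattice

section CliffordGroup

lemma Hmat_sq : Hmat ^ 2 = !![-1, 0, 0; 0, 0, -1; 0, -1, 0] := by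
  have hζ := zeta_relation
  rw [pow_two, Hmat, I_mul_sqrt_three_inv, omega_eq_zeta_cube]
  ext i j
  fin_cases i <;> fin_cases j <;> simp [Matrix.mul_apply, Fin.sum_univ_three] <;> grind

lemma Hg_pow_four : Hg ^ 4 = 1 := by
  apply Units.ext
  change Hmat ^ 4 = 1
  rw [pow_mul Hmat 2 2, Hmat_sq, pow_two]
  ext i j
  fin_cases i <;> fin_cases j <;> simp [Matrix.mul_apply, Fin.sum_univ_three]

lemma Smat_eq_diagonal : Smat = diagonal (ζ ^ 8 • ![1, 1, ω]) := by
  ext i j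
  fin_cases i <;> fin_cases j <;> simp [Smat]

lemma Sg_pow_nine : Sg ^ 9 = 1 := by
  have hζ : ζ ^ 9 = 1 := isPrimitiveRoot_zeta.pow_eq_one
  apply Units.ext
  change Smat ^ 9 = 1
  rw [Smat_eq_diagonal, diagonal_pow, ← diagonal_one]
  congr 1
  ext i
  fin_cases i <;> simp [mul_pow, omega_eq_zeta_cube, pow_right_comm ζ _ 9, hζ]

lemma latticeRep_mem_range_of_mem_Cliff {c : GL (Fin 3) ℂ} (hc : c ∈ Cliff) :
    latticeRep c ∈ (algebraMap ZetaIntegers ℂ).mapMatrix.range := by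
  have hfin : ∀ x ∈ ({Hg, Sg} : Set (GL (Fin 3) ℂ)), IsOfFinOrder x := by
    rintro x (rfl | rfl)
    · exact isOfFinOrder_iff_pow_eq_one.mpr ⟨4, by norm_num, Hg_pow_four⟩
    · exact isOfFinOrder_iff_pow_eq_one.mpr ⟨9, by norm_num, Sg_pow_nine⟩
  have hgen : {Hg, Sg} ⊆
      ((algebraMap ZetaIntegers ℂ).mapMatrix.range.toSubmonoid.comap latticeRep : Set _) := by
    rintro x (rfl | rfl)
    · exact ⟨integralGate .H, by simpa [Letter.g] using map_integralGate_eq_smul_latticeRep .H⟩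
    · exact ⟨integralGate .S, by simpa [Letter.g] using map_integralGate_eq_smul_latticeRep .S⟩
  rw [Cliff, ← Subgroup.mem_toSubmonoid, Subgroup.closure_toSubmonoid_of_isOfFinOrder hfin] at hc
  exact Submonoid.closure_le.mpr hgen hc

end CliffordGroup

section Blocks

/-- The nonempty prefixes and the syllables. -/
def blocks : List (List Letter) :=
  [[.T], [.H, .H, .T], [.H, .T], [.H, .H, .H, .T], [.S, .H, .T], [.S, .H, .H, .H, .T],
    [.S, .S, .H, .T], [.S, .S, .H, .H, .H, .T]]

/-- The first column of the residue of a word; for a block it is the only nonzero one. -/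
def leadingColumn (w : List Letter) : Fin 3 → ZMod 3 := (wordResidue w).col 0

lemma count_T_of_mem_blocks : ∀ b ∈ blocks, b.count .T = 1 := by decide

lemma wordResidue_of_mem_blocks :
    ∀ b ∈ blocks, wordResidue b = vecMulVec (leadingColumn b) ![1, 0, 0] := by decide

lemma leadingColumn_ne_zero : ∀ b ∈ blocks, leadingColumn b ≠ 0 := by decide

lemma eq_of_leadingColumn_eq_smul : ∀ b ∈ blocks, ∀ b' ∈ blocks, ∀ x : ZMod 3,
    leadingColumn b = x • leadingColumn b' → b = b' := by decide

lemma isSimplePoleSystem_blocks :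
    IsSimplePoleSystem uniformizer residueMap latticeRep Cliff {b | b ∈ blocks} wordProd
      leadingColumn ![1, 0, 0] where
  map_uniformizer := residueMap_uniformizer
  integral _ hc := latticeRep_mem_range_of_mem_Cliff hc
  hasResidue b hb := by
    have hres := hasResidue_latticeRep_wordProd b
    rwa [count_T_of_mem_blocks b hb, wordResidue_of_mem_blocks b hb] at hres
  row_ne_zero := by decide
  direction_ne_zero := leadingColumn_ne_zero
  eq_of_direction_eq_smul := eq_of_leadingColumn_eq_smul

lemma mem_blocks_of_mem_Syllables {s : List Letter} (hs : s ∈ Syllables) : s ∈ blocks := by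
  rcases hs with rfl | rfl | rfl | rfl | rfl | rfl <;> decide

lemma dotProduct_leadingColumn_ne_zero {s : List Letter} (hs : s ∈ Syllables) :
    ![1, 0, 0] ⬝ᵥ leadingColumn s ≠ 0 := by
  rcases hs with rfl | rfl | rfl | rfl | rfl | rfl <;> decide

lemma mem_blocks_of_mem_Prefixes {p : List Letter} (hp : p ∈ Prefixes) (hne : p ≠ []) :
    p ∈ blocks := by
  rcases hp with rfl | rfl | rfl
  · exact absurd rfl hne
  all_goals decide

lemma notMem_Syllables_of_mem_Prefixes {p : List Letter} (hp : p ∈ Prefixes) :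
    p ∉ Syllables := by
  rcases hp with rfl | rfl | rfl <;> simp [Syllables]

end Blocks

section CanonicalForms

variable {p p' : List Letter} {ss ss' : List (List Letter)}

/-- The blocks of the canonical form with prefix `p` and syllables `ss`: an empty prefix is not a
block. -/
def blockList (p : List Letter) (ss : List (List Letter)) : List (List Letter) :=
  if p = [] then ss else p :: ss

lemma prod_map_wordProd_blockList (p : List Letter) (ss : List (List Letter)) :
    ((blockList p ss).map wordProd).prod = wordProd (p ++ ss.flatten) := by
  have hflatten : (blockList p ss).flatten = p ++ ss.flatten := by
    unfold blockList
    split_ifs with hp <;> simp [hp]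
  rw [← hflatten, wordProd, List.map_flatten, List.prod_flatten, List.map_map]
  rfl

lemma isReducedBlockList_blockList (hp : p ∈ Prefixes) (hss : ∀ s ∈ ss, s ∈ Syllables) :
    IsReducedBlockList {b | b ∈ blocks} leadingColumn ![1, 0, 0] (blockList p ss) := by
  have hblocks : ∀ s ∈ ss, s ∈ blocks := fun s hs => mem_blocks_of_mem_Syllables (hss s hs)
  have hreduced : ∀ s ∈ ss, ![1, 0, 0] ⬝ᵥ leadingColumn s ≠ 0 := fun s hs =>
    dotProduct_leadingColumn_ne_zero (hss s hs)
  unfold blockList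
  split_ifs with hnil
  · exact ⟨hblocks, fun s hs => hreduced s (List.mem_of_mem_tail hs)⟩
  · exact ⟨List.forall_mem_cons.mpr ⟨mem_blocks_of_mem_Prefixes hp hnil, hblocks⟩, hreduced⟩

lemma eq_and_eq_of_blockList_eq (hp : p ∈ Prefixes) (hp' : p' ∈ Prefixes)
    (hss : ∀ s ∈ ss, s ∈ Syllables) (hss' : ∀ s ∈ ss', s ∈ Syllables)
    (heq : blockList p ss = blockList p' ss') : p = p' ∧ ss = ss' := by
  unfold blockList at heq
  split_ifs at heq with hnil hnil' hnil'
  · exact ⟨hnil.trans hnil'.symm, heq⟩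
  · exact absurd (hss p' (by simp [heq])) (notMem_Syllables_of_mem_Prefixes hp')
  · exact absurd (hss' p (by simp [← heq])) (notMem_Syllables_of_mem_Prefixes hp)
  · exact List.cons.inj heq

end CanonicalForms

/-- Distinct canonical forms represent distinct operators: if two
canonical forms (p, (s₁,…,s_k), c) and (p′, (s′₁,…,s′_m), c′) have equal products in
GL(3,ℂ), then p = p′, k = m, sᵢ = s′ᵢ for all i, and c = c′. -/
theorem canonical_forms_are_unique
    (p p' : List Letter) (ss ss' : List (List Letter)) (c c' : GL (Fin 3) ℂ)
    (hp : p ∈ Prefixes) (hss : ∀ s ∈ ss, s ∈ Syllables) (hc : c ∈ Cliff)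
    (hp' : p' ∈ Prefixes) (hss' : ∀ s ∈ ss', s ∈ Syllables) (hc' : c' ∈ Cliff)
    (heq : wordProd (p ++ ss.flatten) * c = wordProd (p' ++ ss'.flatten) * c') :
    p = p' ∧ ss = ss' ∧ c = c' := by
  obtain ⟨hblocks, rfl⟩ := isSimplePoleSystem_blocks.eq_and_eq_of_prod_mul_eq hc hc'
    (isReducedBlockList_blockList hp hss) (isReducedBlockList_blockList hp' hss')
    (by simpa only [prod_map_wordProd_blockList] using heq)
  obtain ⟨rfl, rfl⟩ := eq_and_eq_of_blockList_eq hp hp' hss hss' hblocks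
  exact ⟨rfl, rfl, rfl⟩

end
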